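/- Let a, b ∈ F_p be nonzero with exponents satisfying e_a − e_b ≥ p. If a ≥ b > 0 then RD(a + b) = a; if a ≤ b < 0 then RU(a + b) = a. Consequently, in these situations Fast2Sum applied to (a, b) with the corresponding directed rounding at every step is error-free and returns exactly (a, b). -/

import Mathlib

/-!
Write `u = 2 ^ e_a`. The exponent gap gives `|b| < 2 ^ (e_b + p) ≤ u`. For `a > 0`, every
floating-point number `≥ 2 ^ ⌊log₂ a⌋` is an integer multiple of `u` (`Fp.exists_int_mul`), so no
floating-point number lies strictly between `a` and `a + u`; since `a ≤ a + b < a + u`, this gives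
`RD (a + b) = a`. The remaining steps of Fast2Sum are then exact: `s - a = 0` and `b - 0 = b` are
floating-point numbers, hence fixed by rounding. The case of negative inputs follows from the
symmetry `RU x = -RD (-x)`.
-/

/-- The radix-2, precision-`p` floating-point numbers with unlimited exponent range. -/
def Fp (p : ℕ) : Set ℝ := {x : ℝ | ∃ M e : ℤ, |M| ≤ 2 ^ p - 1 ∧ x = (M : ℝ) * (2 : ℝ) ^ e}

/-- Round toward `-∞`: the largest floating-point number `≤ x`. -/
noncomputable def RD (p : ℕ) (x : ℝ) : ℝ := sSup {f : ℝ | f ∈ Fp p ∧ f ≤ x}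

/-- Round toward `+∞`: the smallest floating-point number `≥ x`. -/
noncomputable def RU (p : ℕ) (x : ℝ) : ℝ := sInf {f : ℝ | f ∈ Fp p ∧ x ≤ f}

/-- `y` is a faithful rounding of `x`. -/
def Faithful (p : ℕ) (x y : ℝ) : Prop := y = RD p x ∨ y = RU p x

/-- The exponent of a nonzero `a ∈ F_p`: `e_a = ⌊log₂ |a|⌋ - p + 1`. -/
noncomputable def fpExp (p : ℕ) (a : ℝ) : ℤ := Int.log 2 |a| - (p : ℤ) + 1

lemma Fp.neg_mem {p : ℕ} {x : ℝ} (hx : x ∈ Fp p) : -x ∈ Fp p := by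
  obtain ⟨M, e, hM, rfl⟩ := hx
  exact ⟨-M, e, by rwa [abs_neg], by push_cast; ring⟩

lemma Fp.zero_mem (p : ℕ) : (0 : ℝ) ∈ Fp p :=
  ⟨0, 0, by simpa using Int.add_one_le_iff.mpr (by positivity : (0 : ℤ) < 2 ^ p), by simp⟩

lemma RU_eq_neg_RD (p : ℕ) (x : ℝ) : RU p x = -RD p (-x) := by
  unfold RU RD
  rw [Real.sInf_def]
  congr 2
  ext f
  simp only [Set.mem_neg, Set.mem_ofPred_eq]
  constructor
  · rintro ⟨h1, h2⟩
    exact ⟨by simpa using Fp.neg_mem h1, by linarith⟩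
  · rintro ⟨h1, h2⟩
    exact ⟨Fp.neg_mem h1, by linarith⟩

lemma RD_eq_of_forall_le {p : ℕ} {x y : ℝ} (hy : y ∈ Fp p) (hyx : y ≤ x)
    (h : ∀ f ∈ Fp p, f ≤ x → f ≤ y) : RD p x = y :=
  IsGreatest.csSup_eq ⟨⟨hy, hyx⟩, fun f hf => h f hf.1 hf.2⟩

lemma RD_of_mem {p : ℕ} {x : ℝ} (hx : x ∈ Fp p) : RD p x = x :=
  RD_eq_of_forall_le hx le_rfl fun _ _ h => h

/-- A floating-point number in or above the binade `[2 ^ k, 2 ^ (k + 1))` is an integer multiple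
of the unit in the last place `2 ^ (k - p + 1)` of that binade. -/
lemma Fp.exists_int_mul {p : ℕ} {x : ℝ} {k : ℤ} (hx : x ∈ Fp p) (hk : (2 : ℝ) ^ k ≤ x) :
    ∃ N : ℤ, x = N * (2 : ℝ) ^ (k - p + 1) := by
  obtain ⟨M, e, hM, rfl⟩ := hx
  have hM' : (M : ℝ) < 2 ^ (p : ℤ) := by
    have : M < 2 ^ p := by linarith [le_abs_self M]
    rw [zpow_natCast]
    exact_mod_cast this
  have hlt : (2 : ℝ) ^ k < 2 ^ ((p : ℤ) + e) := by
    rw [zpow_add₀ two_ne_zero]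
    exact hk.trans_lt (mul_lt_mul_of_pos_right hM' (by positivity))
  have hke : k < p + e := (zpow_lt_zpow_iff_right₀ one_lt_two).mp hlt
  obtain ⟨n, hn⟩ := Int.eq_ofNat_of_zero_le (by omega : 0 ≤ e - (k - p + 1))
  refine ⟨M * 2 ^ n, ?_⟩
  have he : e = n + (k - p + 1) := by omega
  rw [he, zpow_add₀ two_ne_zero, zpow_natCast]
  push_cast
  ring

/-- No floating-point number lies strictly between a positive `a ∈ F_p` and `a + 2 ^ e_a`. -/
lemma Fp.le_of_lt_add_ulp {p : ℕ} {a f : ℝ} (ha : a ∈ Fp p) (ha0 : 0 < a) (hf : f ∈ Fp p)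
    (h : f < a + (2 : ℝ) ^ fpExp p a) : f ≤ a := by
  by_contra! hlt
  have hlog : (2 : ℝ) ^ Int.log 2 a ≤ a := by
    exact_mod_cast Int.zpow_log_le_self (b := 2) one_lt_two ha0
  obtain ⟨N, hN⟩ := Fp.exists_int_mul ha hlog
  obtain ⟨K, hK⟩ := Fp.exists_int_mul hf (hlog.trans hlt.le)
  rw [fpExp, abs_of_pos ha0] at h
  have hu : (0 : ℝ) < 2 ^ (Int.log 2 a - p + 1) := by positivity
  set u : ℝ := 2 ^ (Int.log 2 a - p + 1)
  have h1 : (N : ℝ) < K := by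
    rw [hN, hK] at hlt
    exact lt_of_mul_lt_mul_right hlt hu.le
  have h2 : (K : ℝ) < N + 1 := by
    rw [hN, hK] at h
    exact lt_of_mul_lt_mul_right (by linarith : (K : ℝ) * u < (N + 1) * u) hu.le
  have h1' : N < K := by exact_mod_cast h1
  have h2' : K < N + 1 := by exact_mod_cast h2
  omega

lemma fpExp_neg (p : ℕ) (a : ℝ) : fpExp p (-a) = fpExp p a := by
  simp [fpExp]

lemma RD_add_eq_left {p : ℕ} {a b : ℝ} (ha : a ∈ Fp p) (ha0 : 0 < a) (hb0 : 0 < b)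
    (hexp : (p : ℤ) ≤ fpExp p a - fpExp p b) : RD p (a + b) = a := by
  have hb : b < (2 : ℝ) ^ fpExp p a := by
    have h1 : b < (2 : ℝ) ^ (Int.log 2 b + 1) := by
      exact_mod_cast Int.lt_zpow_succ_log_self (b := 2) one_lt_two b
    refine h1.trans_le (zpow_le_zpow_right₀ one_le_two ?_)
    have h2 : fpExp p b = Int.log 2 b - p + 1 := by rw [fpExp, abs_of_pos hb0]
    omega
  exact RD_eq_of_forall_le ha (by linarith) fun f hf hfx =>
    Fp.le_of_lt_add_ulp ha ha0 hf (by linarith)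

/-- If `e_a - e_b ≥ p`, then for `a ≥ b > 0` we have `RD(a+b) = a`, and for
`a ≤ b < 0` we have `RU(a+b) = a`; consequently Fast2Sum applied to `(a, b)` with the
corresponding directed rounding at every step is error-free and returns exactly
`(a, b)` (the computed `s = R(a+b)` equals `a` and `t = R(b - R(s - a))` equals `b`). -/
theorem fast2Sum_exact_of_large_exponent_gap
    (p : ℕ) (hp : 2 ≤ p) (a b : ℝ)
    (ha : a ∈ Fp p) (hb : b ∈ Fp p) (ha0 : a ≠ 0) (hb0 : b ≠ 0)
    (hexp : (p : ℤ) ≤ fpExp p a - fpExp p b) :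
    (b ≤ a → 0 < b →
      RD p (a + b) = a ∧ RD p (b - RD p (RD p (a + b) - a)) = b) ∧
    (a ≤ b → b < 0 →
      RU p (a + b) = a ∧ RU p (b - RU p (RU p (a + b) - a)) = b) := by
  constructor
  · intro hba hbpos
    have hs : RD p (a + b) = a := RD_add_eq_left ha (hbpos.trans_le hba) hbpos hexp
    refine ⟨hs, ?_⟩
    rw [hs, sub_self, RD_of_mem (Fp.zero_mem p), sub_zero, RD_of_mem hb]
  · intro hab hbneg
    have hs : RU p (a + b) = a := by
      rw [RU_eq_neg_RD, neg_add, RD_add_eq_left (Fp.neg_mem ha) (by linarith) (by linarith)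
        (by rwa [fpExp_neg, fpExp_neg]), neg_neg]
    refine ⟨hs, ?_⟩
    rw [hs, sub_self, RU_eq_neg_RD p 0, neg_zero, RD_of_mem (Fp.zero_mem p), neg_zero, sub_zero,
      RU_eq_neg_RD, RD_of_mem (Fp.neg_mem hb), neg_neg]
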